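/- (Brezis–Browder ordering principle) Let S be a nonempty set, ≼ a preorder (reflexive and transitive relation) on S, and N : S → ℝ ∪ {+∞} an increasing function (a ≼ b implies N(a) ≤ N(b)). Suppose that every increasing sequence in S (a sequence (a_n) with a_n ≼ a_{n+1} for all n) is bounded from above with respect to ≼. Then for each a₀ ∈ S there exists an N-maximal element a* ∈ S with a₀ ≼ a*, where a* is called N-maximal if for every a ∈ S with a* ≼ a one has N(a*) = N(a). -/

import Mathlib

/-!
For an upper set `U`, the elements `a` such that `U` is met above `a` only if `a ∈ U` already form
a cofinal upper set. Meeting countably many such sets along an increasing sequence and bounding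
that sequence gives an element above `a₀` lying in all of them. For the sets `U = {x | d ≤ N x}`,
with `d` in a countable set of levels detecting every strict inequality between values, the
element found is `N`-maximal, as a strict increase of `N` above it would reach a new level.
-/

open Set TopologicalSpace

section DecidingSet

variable {S : Type*} [Preorder S] {U : Set S}

/-- The elements that decide membership in `U`, in the sense of forcing: those above which `U` is
met only if they already lie in `U`. For `U = {x | d ≤ N x}` these are the points at which the
level `d` has been reached or can no longer be reached. -/
def decidingSet (U : Set S) : Set S :=
  {a | ∀ b, a ≤ b → b ∈ U → a ∈ U}

lemma isCofinal_decidingSet (U : Set S) : IsCofinal (decidingSet U) := by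
  intro a
  by_cases h : ∃ b, a ≤ b ∧ b ∈ U
  · obtain ⟨b, hab, hbU⟩ := h
    exact ⟨b, fun _ _ _ => hbU, hab⟩
  · exact ⟨a, fun b hab hbU => (h ⟨b, hab, hbU⟩).elim, le_rfl⟩

lemma isUpperSet_decidingSet (hU : IsUpperSet U) : IsUpperSet (decidingSet U) :=
  fun _ _ hab ha c hbc hcU => hU hab (ha c (hab.trans hbc) hcU)

end DecidingSet

lemma exists_ge_forall_mem_of_isCofinal_of_isUpperSet {S ι : Type*} [Preorder S] [Countable ι]
    (hbdd : ∀ a : ℕ → S, Monotone a → BddAbove (range a)) {D : ι → Set S}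
    (hcof : ∀ i, IsCofinal (D i)) (hupper : ∀ i, IsUpperSet (D i)) (a₀ : S) :
    ∃ b, a₀ ≤ b ∧ ∀ i, b ∈ D i := by
  have := Encodable.ofCountable ι
  let 𝒟 (i : ι) : Order.Cofinal S := ⟨D i, hcof i⟩
  obtain ⟨b, hb⟩ := hbdd _ (Order.sequenceOfCofinals.monotone a₀ 𝒟)
  exact ⟨b, hb ⟨0, rfl⟩,
    fun i => hupper i (hb (mem_range_self _)) (Order.sequenceOfCofinals.encode_mem a₀ 𝒟 i)⟩

/-- A set of levels that detects every strict inequality of a preorder: whenever `u < v`, some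
level is reached by `v` but not by `u`. In a linear order this says that `D` meets `Ioc u v`. -/
def IsOrderSeparating {α : Type*} [Preorder α] (D : Set α) : Prop :=
  ∀ ⦃u v⦄, u < v → ∃ d ∈ D, ¬ d ≤ u ∧ d ≤ v

lemma exists_countable_isOrderSeparating (α : Type*) [LinearOrder α] [TopologicalSpace α]
    [OrderTopology α] [SecondCountableTopology α] :
    ∃ D : Set α, D.Countable ∧ IsOrderSeparating D := by
  obtain ⟨s, hs_countable, hs_dense⟩ := exists_countable_dense α
  refine ⟨s ∪ {v | ∃ u, u ⋖ v}, hs_countable.union countable_setOfPred_covBy_left,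
    fun u v huv => ?_⟩
  by_cases hcov : u ⋖ v
  · exact ⟨v, .inr ⟨u, hcov⟩, huv.not_ge, le_rfl⟩
  · have hne : (Ioo u v).Nonempty := (not_covBy_iff_nonempty_Ioo huv).1 hcov
    obtain ⟨d, ⟨hud, hdv⟩, hds⟩ := hs_dense.inter_open_nonempty _ isOpen_Ioo hne
    exact ⟨d, .inl hds, hud.not_ge, hdv.le⟩

theorem brezis_browder_general {S α : Type*} [Preorder S] [PartialOrder α] {D : Set α}
    (hD : D.Countable) (hsep : IsOrderSeparating D) {N : S → α} (hN : Monotone N)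
    (hbdd : ∀ a : ℕ → S, Monotone a → BddAbove (range a)) (a₀ : S) :
    ∃ b, a₀ ≤ b ∧ ∀ a, b ≤ a → N b = N a := by
  have := hD.to_subtype
  obtain ⟨b, hab, hb⟩ := exists_ge_forall_mem_of_isCofinal_of_isUpperSet hbdd
    (fun d : D => isCofinal_decidingSet (N ⁻¹' Ici d.1))
    (fun d => isUpperSet_decidingSet ((isUpperSet_Ici d.1).preimage hN)) a₀
  refine ⟨b, hab, fun a hba => ?_⟩
  by_contra hne
  obtain ⟨d, hdD, hdb, hda⟩ := hsep ((hN hba).lt_of_ne hne)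
  exact hdb (hb ⟨d, hdD⟩ a hba hda)

/-- Brezis–Browder ordering principle: if `≼` is a preorder on a nonempty
set `S`, `N : S → ℝ ∪ {+∞}` is increasing, and every increasing sequence in `S` is
bounded from above, then for each `a₀ ∈ S` there is an `N`-maximal element `a*` with
`a₀ ≼ a*`. -/
theorem brezis_browder {S : Type*} [Nonempty S] (r : S → S → Prop)
    (hrefl : ∀ a, r a a) (htrans : ∀ a b c, r a b → r b c → r a c)
    (N : S → WithTop ℝ) (hN : ∀ a b, r a b → N a ≤ N b)
    (hbdd : ∀ a : ℕ → S, (∀ n, r (a n) (a (n + 1))) → ∃ b, ∀ n, r (a n) b)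
    (a₀ : S) :
    ∃ astar : S, r a₀ astar ∧ ∀ a : S, r astar a → N astar = N a := by
  let _ : Preorder S := { le := r, le_refl := hrefl, le_trans := htrans }
  obtain ⟨D, hD, hsep⟩ := exists_countable_isOrderSeparating (WithTop ℝ)
  exact brezis_browder_general hD hsep hN
    (fun a ha => (hbdd a fun n => ha n.le_succ).imp fun _ => forall_mem_range.2) a₀
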